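/- arXiv:2501.10599 — 2 statements merged into one kernel-verified Lean document; each statement's English description precedes it below -/
import Mathlib

section
/- Let p > 1 and a, b, L > 0. Then λ^{a,b}_{1,p}(0,L) = ((a+b)/2)^p · λ_{1,p}(0,L), where λ_{1,p}(0,L) = λ^{1,1}_{1,p}(0,L) is the first Dirichlet eigenvalue of the classical one-dimensional p-Laplacian. -/
open Set

/-- `u` is C¹ on `[α, γ]` with derivative `u'` there. -/
def C1On (α γ : ℝ) (u u' : ℝ → ℝ) : Prop :=
  (∀ t ∈ Set.Icc α γ, HasDerivWithinAt u (u' t) (Set.Icc α γ) t) ∧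
  ContinuousOn u' (Set.Icc α γ)

/-- Admissible functions on `[0, L]`: C¹ with zero boundary values. -/
def Adm (L : ℝ) (u u' : ℝ → ℝ) : Prop :=
  C1On 0 L u u' ∧ u 0 = 0 ∧ u L = 0

/-- The asymmetric energy integrand `a^p (s⁺)^p + b^p (s⁻)^p`. -/
noncomputable def asymE (p a b s : ℝ) : ℝ :=
  a ^ p * (max s 0) ^ p + b ^ p * (max (-s) 0) ^ p

/-- The asymmetric flux `a^p (s⁺)^(p-1) - b^p (s⁻)^(p-1)`. -/
noncomputable def asymFlux (p a b s : ℝ) : ℝ :=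
  a ^ p * (max s 0) ^ (p - 1) - b ^ p * (max (-s) 0) ^ (p - 1)

/-- The first Dirichlet eigenvalue `λ^{a,b}_{1,p}(0,L)`, as the infimum of the
asymmetric energy over normalized admissible functions. -/
noncomputable def lam1 (p a b L : ℝ) : ℝ :=
  sInf { E : ℝ | ∃ u u' : ℝ → ℝ, Adm L u u' ∧
    (∫ t in (0:ℝ)..L, |u t| ^ p) = 1 ∧
    E = ∫ t in (0:ℝ)..L, asymE p a b (u' t) }

/-- `u` (a C¹ function on `[0,L]` with derivative `u'` and zero boundary values)
is a weak solution of `-Δ^{a,b}_p u = g` on `(0,L)`. -/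
def IsWeakSol (p a b L : ℝ) (u u' g : ℝ → ℝ) : Prop :=
  Adm L u u' ∧
  ∀ φ φ' : ℝ → ℝ, Adm L φ φ' →
    (∫ t in (0:ℝ)..L, asymFlux p a b (u' t) * φ' t) =
      ∫ t in (0:ℝ)..L, g t * φ t

/-- primitive vanishing at zero -/
noncomputable def prim (g : ℝ → ℝ) (t : ℝ) : ℝ := ∫ s in (0:ℝ)..t, g s

def Good (p a b L K : ℝ) : Prop :=
  ∀ g : ℝ → ℝ, Continuous g → prim g L = 0 →
    K * (∫ t in (0:ℝ)..L, |prim g t| ^ p) ≤ ∫ t in (0:ℝ)..L, asymE p a b (g t)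

def MGood (p k : ℝ) : Prop :=
  ∀ g : ℝ → ℝ, Continuous g → (∀ t, 0 ≤ g t) →
    k * (∫ t in (0:ℝ)..1, (prim g t) ^ p) ≤ ∫ t in (0:ℝ)..1, (g t) ^ p

lemma prim_hasDerivAt {g : ℝ → ℝ} (hg : Continuous g) (t : ℝ) : HasDerivAt (prim g) (g t) t :=
  (hg.integral_hasStrictDerivAt 0 t).hasDerivAt

lemma prim_cont {g : ℝ → ℝ} (hg : Continuous g) : Continuous (prim g) :=
  continuous_iff_continuousAt.2 fun t => (prim_hasDerivAt hg t).continuousAt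

lemma prim_zero (g : ℝ → ℝ) : prim g 0 = 0 := by simp [prim]

lemma cont_rp {p : ℝ} (hp : 1 < p) {f : ℝ → ℝ} (hf : Continuous f) :
    Continuous (fun t => f t ^ p) := hf.rpow_const fun _ => Or.inr (by linarith)

lemma asymE_cont {p : ℝ} (hp : 1 < p) (a b : ℝ) {g : ℝ → ℝ} (hg : Continuous g) :
    Continuous (fun t => asymE p a b (g t)) := by
  unfold asymE
  exact (continuous_const.mul (cont_rp hp (hg.max continuous_const))).add
    (continuous_const.mul (cont_rp hp (hg.neg.max continuous_const)))

lemma asymE_nonneg {p a b : ℝ} (ha : 0 < a) (hb : 0 < b) (s : ℝ) : 0 ≤ asymE p a b s := by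
  unfold asymE
  have : 0 ≤ max s 0 := le_max_right _ _
  have : 0 ≤ max (-s) 0 := le_max_right _ _
  positivity

lemma asymE_smul {p a b c : ℝ} (hc : 0 ≤ c) (s : ℝ) :
    asymE p a b (c * s) = c ^ p * asymE p a b s := by
  unfold asymE
  have h1 : max (c * s) 0 = c * max s 0 := by rw [mul_max_of_nonneg _ _ hc, mul_zero]
  have h2 : max (-(c * s)) 0 = c * max (-s) 0 := by
    rw [mul_max_of_nonneg _ _ hc, mul_zero, mul_neg]
  rw [h1, h2, Real.mul_rpow hc (le_max_right _ _), Real.mul_rpow hc (le_max_right _ _)]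
  ring

lemma prim_smul (c : ℝ) (g : ℝ → ℝ) (t : ℝ) : prim (fun s => c * g s) t = c * prim g t := by
  simp [prim]

lemma adm_prim {g : ℝ → ℝ} {L : ℝ} (hg : Continuous g) (h : prim g L = 0) : Adm L (prim g) g :=
  ⟨⟨fun t _ => (prim_hasDerivAt hg t).hasDerivWithinAt, hg.continuousOn⟩, prim_zero g, h⟩

lemma adm_ext {L : ℝ} (hL : 0 < L) {u u' : ℝ → ℝ} (h : Adm L u u') :
    ∃ g : ℝ → ℝ, Continuous g ∧ prim g L = 0 ∧ (∀ t ∈ Icc 0 L, prim g t = u t) ∧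
      ∀ t ∈ Icc 0 L, g t = u' t := by
  obtain ⟨⟨hd, hc⟩, h0, h1⟩ := h
  let g : ℝ → ℝ := IccExtend hL.le ((Icc 0 L).domRestrict u')
  have hg : Continuous g := (continuousOn_iff_continuous_domRestrict.1 hc).Icc_extend'
  have hgu : ∀ t ∈ Icc 0 L, g t = u' t := fun t ht => by
    simp [g, IccExtend_of_mem hL.le _ ht]
  have key : ∀ t ∈ Icc 0 L, prim g t = u t := by
    intro t ht
    have hsub : Icc 0 t ⊆ Icc 0 L := Icc_subset_Icc_right ht.2
    have := intervalIntegral.integral_eq_sub_of_hasDerivAt_of_le (f := u) (f' := g) ht.1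
      (fun s hs => ((hd s (hsub hs)).continuousWithinAt).mono hsub)
      (fun s hs => by
        have hs' : s ∈ Icc 0 L := hsub (Ioo_subset_Icc_self hs)
        rw [hgu s hs']
        exact (hd s hs').hasDerivAt (Icc_mem_nhds hs.1 (hs.2.trans_le ht.2)))
      (hg.intervalIntegrable _ _)
    rw [prim, this, h0, sub_zero]
  exact ⟨g, hg, by rw [key L ⟨hL.le, le_rfl⟩, h1], key, hgu⟩

lemma set_elem {p a b L : ℝ} (hp : 1 < p) {g : ℝ → ℝ} (hg : Continuous g) (h0 : prim g L = 0)
    (hI : 0 < ∫ t in (0:ℝ)..L, |prim g t| ^ p) :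
    (∫ t in (0:ℝ)..L, |prim g t| ^ p)⁻¹ * (∫ t in (0:ℝ)..L, asymE p a b (g t)) ∈
     { E : ℝ | ∃ u u' : ℝ → ℝ, Adm L u u' ∧
    (∫ t in (0:ℝ)..L, |u t| ^ p) = 1 ∧
    E = ∫ t in (0:ℝ)..L, asymE p a b (u' t) } := by
  set I := ∫ t in (0:ℝ)..L, |prim g t| ^ p with hIdef
  set c := I⁻¹ ^ (p⁻¹) with hc
  have hc0 : 0 ≤ c := by positivity
  have hcp : c ^ p = I⁻¹ := Real.rpow_inv_rpow (by positivity) (by linarith)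
  refine ⟨prim (fun s => c * g s), fun s => c * g s,
    adm_prim (continuous_const.mul hg) (by rw [prim_smul, h0, mul_zero]), ?_, ?_⟩
  · have : ∀ t, |prim (fun s => c * g s) t| ^ p = c ^ p * |prim g t| ^ p := fun t => by
      rw [prim_smul, abs_mul, abs_of_nonneg hc0, Real.mul_rpow hc0 (abs_nonneg _)]
    simp_rw [this]
    rw [intervalIntegral.integral_const_mul, hcp, ← hIdef, inv_mul_cancel₀ hI.ne']
  · simp_rw [asymE_smul hc0]
    rw [intervalIntegral.integral_const_mul, hcp]

lemma le_lam1_iff {p a b L : ℝ} (hp : 1 < p) (ha : 0 < a) (hb : 0 < b) (hL : 0 < L) (K : ℝ) :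
    K ≤ lam1 p a b L ↔ Good p a b L K := by
  constructor
  · intro hK g hg h0
    have hE : 0 ≤ ∫ t in (0:ℝ)..L, asymE p a b (g t) :=
      intervalIntegral.integral_nonneg hL.le fun t _ => asymE_nonneg ha hb _
    have hI : 0 ≤ ∫ t in (0:ℝ)..L, |prim g t| ^ p :=
      intervalIntegral.integral_nonneg hL.le fun t _ => by positivity
    rcases hI.eq_or_lt with hI | hI
    · rw [← hI, mul_zero]; exact hE
    · have h1 : lam1 p a b L ≤ _ := csInf_le ⟨0, by
        rintro E ⟨u, u', _, _, rfl⟩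
        exact intervalIntegral.integral_nonneg hL.le fun t _ => asymE_nonneg ha hb _⟩
        (set_elem (a := a) (b := b) hp hg h0 hI)
      have h2 := hK.trans h1
      rwa [inv_mul_eq_div, le_div_iff₀ hI] at h2
  · intro hK
    apply le_csInf
    · have hg : Continuous (fun s : ℝ => L - 2 * s) := by fun_prop
      have hpr : ∀ t, prim (fun s : ℝ => L - 2 * s) t = t * (L - t) := by
        intro t
        rw [prim, intervalIntegral.integral_eq_sub_of_hasDerivAt (f := fun t => t * (L - t))
          (f' := fun s => L - 2 * s)]
        · ring
        · intro s _
          have := (hasDerivAt_id s).mul ((hasDerivAt_id s).const_sub L)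
          refine this.congr_deriv ?_
          simp; ring
        · exact hg.intervalIntegrable _ _
      refine ⟨_, set_elem (g := fun s => L - 2 * s) hp hg (by rw [hpr]; ring) ?_⟩
      refine intervalIntegral.intervalIntegral_pos_of_pos_on
        ((cont_rp hp (prim_cont hg).abs).intervalIntegrable _ _) ?_ hL
      intro t ht
      rw [hpr]
      have : 0 < t * (L - t) := mul_pos ht.1 (sub_pos.2 ht.2)
      positivity
    · rintro E ⟨u, u', hA, h1, rfl⟩
      obtain ⟨g, hg, h0, hu, hu'⟩ := adm_ext hL hA
      have := hK g hg h0
      have e1 : (∫ t in (0:ℝ)..L, |prim g t| ^ p) = ∫ t in (0:ℝ)..L, |u t| ^ p := by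
        apply intervalIntegral.integral_congr
        intro t ht
        rw [uIcc_of_le hL.le] at ht
        simp only [hu t ht]
      have e2 : (∫ t in (0:ℝ)..L, asymE p a b (g t)) = ∫ t in (0:ℝ)..L, asymE p a b (u' t) := by
        apply intervalIntegral.integral_congr
        intro t ht
        rw [uIcc_of_le hL.le] at ht
        simp only [hu' t ht]
      rwa [e1, e2, h1, mul_one] at this

lemma limit_lemma {p k C y : ℝ} (hp : 1 < p) {u : ℝ → ℝ} (hu : Continuous u)
    (h : ∀ ε > 0, k * (∫ t in (0:ℝ)..y, (max (|u t| - ε) 0) ^ p) ≤ C) :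
    k * (∫ t in (0:ℝ)..y, |u t| ^ p) ≤ C := by
  have hc : Continuous fun ε : ℝ => k * (∫ t in (0:ℝ)..y, (max (|u t| - ε) 0) ^ p) := by
    refine continuous_const.mul
      (intervalIntegral.continuous_parametric_intervalIntegral_of_continuous' ?_ _ _)
    refine Continuous.rpow_const ?_ fun _ => Or.inr (by linarith)
    fun_prop
  have h1 := (hc.tendsto 0).mono_left (nhdsWithin_le_nhds (s := Ioi 0))
  have h2 := le_of_tendsto h1 (eventually_nhdsWithin_of_forall fun ε hε => h ε hε)
  have : ∀ t, max (|u t| - 0) 0 = |u t| := fun t => by simp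
  simpa only [this] using h2

lemma prim_comp_mul (g : ℝ → ℝ) {y : ℝ} (hy : 0 < y) (s : ℝ) :
    prim (fun r => y * g (y * r)) s = prim g (y * s) := by
  unfold prim
  rw [intervalIntegral.integral_const_mul, intervalIntegral.integral_comp_mul_left _ hy.ne',
    smul_eq_mul, mul_zero, mul_inv_cancel_left₀ hy.ne']

lemma MGood.scale {p k y : ℝ} (hM : MGood p k) (hy : 0 < y) {g : ℝ → ℝ}
    (hg : Continuous g) (h0 : ∀ t, 0 ≤ g t) :
    k * (∫ t in (0:ℝ)..y, (prim g t) ^ p) ≤ y ^ p * ∫ t in (0:ℝ)..y, (g t) ^ p := by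
  have h := hM (fun r => y * g (y * r)) (by fun_prop) (fun t => mul_nonneg hy.le (h0 _))
  simp_rw [prim_comp_mul g hy, Real.mul_rpow hy.le (h0 _)] at h
  rw [intervalIntegral.integral_const_mul,
    intervalIntegral.integral_comp_mul_left (fun s => (prim g s) ^ p) hy.ne',
    intervalIntegral.integral_comp_mul_left (fun s => (g s) ^ p) hy.ne',
    smul_eq_mul, smul_eq_mul, mul_zero, mul_one] at h
  have h' := mul_le_mul_of_nonneg_left h hy.le
  calc _ = y * (k * (y⁻¹ * ∫ t in (0:ℝ)..y, (prim g t) ^ p)) := by field_simp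
    _ ≤ _ := h'
    _ = _ := by field_simp

noncomputable def theta (ε s : ℝ) : ℝ := min (max s 0 / ε) 1

lemma theta_cont (ε : ℝ) : Continuous (theta ε) := by
  unfold theta
  fun_prop

lemma theta_nonneg {ε : ℝ} (hε : 0 < ε) (s : ℝ) : 0 ≤ theta ε s :=
  le_min (div_nonneg (le_max_right _ _) hε.le) zero_le_one

lemma theta_le_one (ε s : ℝ) : theta ε s ≤ 1 := min_le_right _ _

lemma theta_of_nonpos {ε s : ℝ} (hs : s ≤ 0) : theta ε s = 0 := by
  simp [theta, max_eq_right hs]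

lemma theta_of_ge {ε s : ℝ} (hε : 0 < ε) (hs : ε ≤ s) : theta ε s = 1 := by
  unfold theta
  rw [max_eq_left (hε.le.trans hs)]
  exact min_eq_right ((one_le_div hε).2 hs)

lemma prim_theta_ge {ε : ℝ} (hε : 0 < ε) (s : ℝ) : s - ε ≤ prim (theta ε) s := by
  have hd : ∀ s, HasDerivAt (fun s => prim (theta ε) s - s) (theta ε s - 1) s := fun s =>
    (prim_hasDerivAt (theta_cont ε) s).sub (hasDerivAt_id s)
  have hanti : Antitone (fun s => prim (theta ε) s - s) := by
    apply antitone_of_deriv_nonpos (fun s => (hd s).differentiableAt)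
    intro s
    rw [(hd s).deriv]
    linarith [theta_le_one ε s]
  have h1 : 0 ≤ prim (theta ε) ε :=
    intervalIntegral.integral_nonneg hε.le fun t _ => theta_nonneg hε t
  rcases le_total s ε with h | h
  · have := hanti h
    simp only at this
    linarith
  · have e : prim (theta ε) s = prim (theta ε) ε + ∫ t in ε..s, theta ε t := by
      unfold prim
      rw [intervalIntegral.integral_add_adjacent_intervals] <;>
      exact (theta_cont ε).intervalIntegrable _ _
    have e2 : ∫ t in ε..s, theta ε t = ∫ t in ε..s, (1:ℝ) := by
      apply intervalIntegral.integral_congr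
      intro t ht
      rw [uIcc_of_le h] at ht
      exact theta_of_ge hε ht.1
    rw [e, e2]
    simp
    linarith

lemma half {p k y ε : ℝ} (hp : 1 < p) (hk : 0 ≤ k) (hM : MGood p k) (hy : 0 < y) (hε : 0 < ε)
    {g : ℝ → ℝ} (hg : Continuous g) :
    k * (∫ t in (0:ℝ)..y, (max (prim g t - ε) 0) ^ p) ≤
      y ^ p * ∫ t in (0:ℝ)..y, theta ε (prim g t) ^ p * (max (g t) 0) ^ p := by
  have hu := prim_cont hg
  have hθ : Continuous fun t => theta ε (prim g t) := (theta_cont ε).comp hu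
  set q : ℝ → ℝ := fun t => theta ε (prim g t) * max (g t) 0 with hq
  have hqc : Continuous q := hθ.mul (hg.max continuous_const)
  have hq0 : ∀ t, 0 ≤ q t := fun t => mul_nonneg (theta_nonneg hε _) (le_max_right _ _)
  have h := hM.scale hy hqc hq0
  have e : ∀ t, q t ^ p = theta ε (prim g t) ^ p * (max (g t) 0) ^ p := fun t =>
    Real.mul_rpow (theta_nonneg hε _) (le_max_right _ _)
  simp_rw [e] at h
  refine le_trans (mul_le_mul_of_nonneg_left ?_ hk) h
  refine intervalIntegral.integral_mono_on hy.le
    ((cont_rp hp (by fun_prop)).intervalIntegrable _ _)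
    ((cont_rp hp (prim_cont hqc)).intervalIntegrable _ _) ?_
  intro t ht
  refine Real.rpow_le_rpow (le_max_right _ _) (max_le ?_ ?_) (by linarith)
  · refine (prim_theta_ge hε _).trans ?_
    have hd : ∀ s, HasDerivAt (fun s => prim (theta ε) (prim g s))
        (theta ε (prim g s) * g s) s := fun s =>
      (prim_hasDerivAt (theta_cont ε) _).comp s (prim_hasDerivAt hg s)
    have := intervalIntegral.integral_eq_sub_of_hasDerivAt (a := 0) (b := t) (fun s _ => hd s)
      ((hθ.mul hg).intervalIntegrable _ _)
    rw [prim_zero, prim_zero, sub_zero] at this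
    rw [← this]
    refine intervalIntegral.integral_mono_on ht.1
      ((hθ.mul hg).intervalIntegrable _ _) (hqc.intervalIntegrable _ _) ?_
    intro s _
    exact mul_le_mul_of_nonneg_left (le_max_left _ _) (theta_nonneg hε _)
  · exact intervalIntegral.integral_nonneg ht.1 fun s _ => hq0 s

lemma asymE_ge_left {p a b : ℝ} (hb : 0 < b) (s : ℝ) :
    a ^ p * (max s 0) ^ p ≤ asymE p a b s := by
  unfold asymE
  have : 0 ≤ max (-s) 0 := le_max_right _ _
  have : 0 ≤ b ^ p * (max (-s) 0) ^ p := by positivity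
  linarith

lemma asymE_ge_right {p a b : ℝ} (ha : 0 < a) (s : ℝ) :
    b ^ p * (max (-s) 0) ^ p ≤ asymE p a b s := by
  unfold asymE
  have : 0 ≤ max s 0 := le_max_right _ _
  have : 0 ≤ a ^ p * (max s 0) ^ p := by positivity
  linarith

lemma asymE_neg (p a b s : ℝ) : asymE p b a (-s) = asymE p a b s := by
  unfold asymE
  rw [neg_neg, add_comm]

lemma scale_id {p a S L K : ℝ} (ha : 0 < a) (hS : 0 < S) (hL : 0 < L) :
    K * (L / S) ^ p * a ^ p = K * (a * L / S) ^ p := by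
  rw [mul_assoc, ← Real.mul_rpow (by positivity) ha.le]
  congr 2
  ring

lemma half' {p a S L K ε : ℝ} (hp : 1 < p) (ha : 0 < a) (hS : 0 < S) (hL : 0 < L) (hK : 0 ≤ K)
    (hM : MGood p (K * (L / S) ^ p)) (hε : 0 < ε) {g : ℝ → ℝ} (hg : Continuous g) :
    K * (∫ t in (0:ℝ)..(a * L / S), (max (prim g t - ε) 0) ^ p) ≤
      ∫ t in (0:ℝ)..(a * L / S), theta ε (prim g t) ^ p * (a ^ p * (max (g t) 0) ^ p) := by
  have hy : 0 < a * L / S := by positivity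
  have h := half hp (by positivity) hM hy hε hg
  have hyp : 0 < (a * L / S) ^ p := by positivity
  have hap : 0 < a ^ p := by positivity
  have e : ∀ t, theta ε (prim g t) ^ p * (a ^ p * (max (g t) 0) ^ p) =
    a ^ p * (theta ε (prim g t) ^ p * (max (g t) 0) ^ p) := fun t => by ring
  simp_rw [e]
  rw [intervalIntegral.integral_const_mul]
  have h2 := mul_le_mul_of_nonneg_right h hap.le
  have hs := scale_id (p := p) (K := K) ha hS hL
  refine le_of_mul_le_mul_left ?_ hyp
  set A := ∫ t in (0:ℝ)..(a * L / S), (max (prim g t - ε) 0) ^ p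
  set B := ∫ t in (0:ℝ)..(a * L / S), theta ε (prim g t) ^ p * (max (g t) 0) ^ p
  calc _ = K * (a * L / S) ^ p * A := by ring
    _ = K * (L / S) ^ p * a ^ p * A := by rw [hs]
    _ = K * (L / S) ^ p * A * a ^ p := by ring
    _ ≤ _ := h2
    _ = _ := by ring

lemma posPart {p a b L K ε : ℝ} (hp : 1 < p) (ha : 0 < a) (hb : 0 < b) (hL : 0 < L) (hK : 0 ≤ K)
    (hM : MGood p (K * (L / (a + b)) ^ p)) (hε : 0 < ε) {g : ℝ → ℝ} (hg : Continuous g)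
    (h0 : prim g L = 0) :
    K * (∫ t in (0:ℝ)..L, (max (prim g t - ε) 0) ^ p) ≤
      ∫ t in (0:ℝ)..L, theta ε (prim g t) ^ p * asymE p a b (g t) := by
  have hS : 0 < a + b := by positivity
  set x := a * L / (a + b) with hx
  set y := b * L / (a + b) with hy
  have hx0 : 0 < x := by positivity
  have hy0 : 0 < y := by positivity
  have hxy : L - y = x := by rw [hx, hy]; field_simp; ring
  have hxL : x ≤ L := by linarith
  have hu := prim_cont hg
  have hθ : Continuous fun t => theta ε (prim g t) := (theta_cont ε).comp hu
  have c1 : Continuous fun t => (max (prim g t - ε) 0) ^ p := cont_rp hp (by fun_prop)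
  have c2 : Continuous fun t => theta ε (prim g t) ^ p * asymE p a b (g t) :=
    (cont_rp hp hθ).mul (asymE_cont hp a b hg)
  have cm : ∀ {f : ℝ → ℝ}, Continuous f → Continuous fun t => (max (f t) 0) ^ p :=
    fun hf => cont_rp hp (hf.max continuous_const)
  have h1 := half' hp ha hS hL hK hM hε hg
  have hgr : Continuous fun t => -g (L - t) := by fun_prop
  have h2 := half' hp hb hS hL hK hM hε hgr
  rw [← hx] at h1
  rw [← hy] at h2
  have hr : ∀ t, prim (fun t => -g (L - t)) t = prim g (L - t) := by
    intro t
    unfold prim at h0 ⊢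
    rw [intervalIntegral.integral_neg, intervalIntegral.integral_comp_sub_left, sub_zero,
      ← intervalIntegral.integral_add_adjacent_intervals (a := 0) (b := L - t) (c := L)
      (hg.intervalIntegrable _ _) (hg.intervalIntegrable _ _)] at *
    linarith
  simp_rw [hr] at h2
  rw [intervalIntegral.integral_comp_sub_left (fun t => (max (prim g t - ε) 0) ^ p),
    intervalIntegral.integral_comp_sub_left
      (fun t => theta ε (prim g t) ^ p * (b ^ p * (max (-g t) 0) ^ p)), sub_zero, hxy] at h2
  have h1' : ∫ t in (0:ℝ)..x, theta ε (prim g t) ^ p * (a ^ p * (max (g t) 0) ^ p) ≤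
      ∫ t in (0:ℝ)..x, theta ε (prim g t) ^ p * asymE p a b (g t) := by
    refine intervalIntegral.integral_mono_on hx0.le
      (((cont_rp hp hθ).mul (continuous_const.mul (cm hg))).intervalIntegrable _ _)
      (c2.intervalIntegrable _ _) fun t _ => ?_
    exact mul_le_mul_of_nonneg_left (asymE_ge_left hb _)
      (Real.rpow_nonneg (theta_nonneg hε _) _)
  have h2' : ∫ t in x..L, theta ε (prim g t) ^ p * (b ^ p * (max (-g t) 0) ^ p) ≤
      ∫ t in x..L, theta ε (prim g t) ^ p * asymE p a b (g t) := by
    refine intervalIntegral.integral_mono_on hxL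
      (((cont_rp hp hθ).mul (continuous_const.mul (cm hg.neg))).intervalIntegrable _ _)
      (c2.intervalIntegrable _ _) fun t _ => ?_
    exact mul_le_mul_of_nonneg_left (asymE_ge_right ha _)
      (Real.rpow_nonneg (theta_nonneg hε _) _)
  rw [← intervalIntegral.integral_add_adjacent_intervals (c1.intervalIntegrable 0 x)
      (c1.intervalIntegrable x L),
    ← intervalIntegral.integral_add_adjacent_intervals (c2.intervalIntegrable 0 x)
      (c2.intervalIntegrable x L), mul_add]
  linarith

lemma good_of_MGood {p a b L K : ℝ} (hp : 1 < p) (ha : 0 < a) (hb : 0 < b) (hL : 0 < L)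
    (hK : 0 ≤ K) (hM : MGood p (K * (L / (a + b)) ^ p)) : Good p a b L K := by
  intro g hg h0
  have hu := prim_cont hg
  refine limit_lemma hp hu fun ε hε => ?_
  have h1 := posPart hp ha hb hL hK hM hε hg h0
  have hpn : ∀ t, prim (fun s => -g s) t = -prim g t := fun t => by simp [prim]
  have h2 := posPart (g := fun s => -g s) hp hb ha hL hK (by rwa [add_comm b a]) hε hg.neg
    (by rw [hpn, h0, neg_zero])
  simp_rw [hpn, asymE_neg] at h2
  have cm : ∀ {f : ℝ → ℝ}, Continuous f → Continuous fun t => (max (f t) 0) ^ p :=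
    fun hf => cont_rp hp (hf.max continuous_const)
  have cE := asymE_cont hp a b hg
  have cθ1 : Continuous fun t => theta ε (prim g t) ^ p * asymE p a b (g t) :=
    (cont_rp hp ((theta_cont ε).comp hu)).mul cE
  have cθ2 : Continuous fun t => theta ε (-prim g t) ^ p * asymE p a b (g t) :=
    (cont_rp hp ((theta_cont ε).comp hu.neg)).mul cE
  have cm1 := cm (f := fun t => prim g t - ε) (by fun_prop)
  have cm2 := cm (f := fun t => -prim g t - ε) (by fun_prop)
  have hp0 : p ≠ 0 := by linarith
  have e1 : ∫ t in (0:ℝ)..L, (max (|prim g t| - ε) 0) ^ p =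
      (∫ t in (0:ℝ)..L, (max (prim g t - ε) 0) ^ p) +
      ∫ t in (0:ℝ)..L, (max (-prim g t - ε) 0) ^ p := by
    rw [← intervalIntegral.integral_add (cm1.intervalIntegrable _ _) (cm2.intervalIntegrable _ _)]
    congr 1
    ext t
    rcases le_total 0 (prim g t) with h | h
    · rw [abs_of_nonneg h, max_eq_right (a := -prim g t - ε) (by linarith),
        Real.zero_rpow hp0, add_zero]
    · rw [abs_of_nonpos h, max_eq_right (a := prim g t - ε) (by linarith),
        Real.zero_rpow hp0, zero_add]
  have e2 : (∫ t in (0:ℝ)..L, theta ε (prim g t) ^ p * asymE p a b (g t)) +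
      (∫ t in (0:ℝ)..L, theta ε (-prim g t) ^ p * asymE p a b (g t)) ≤
      ∫ t in (0:ℝ)..L, asymE p a b (g t) := by
    rw [← intervalIntegral.integral_add (cθ1.intervalIntegrable _ _)
      (cθ2.intervalIntegrable _ _)]
    refine intervalIntegral.integral_mono_on hL.le ((cθ1.add cθ2).intervalIntegrable _ _)
      (cE.intervalIntegrable _ _) fun t _ => ?_
    have hE := asymE_nonneg (p := p) ha hb (g t)
    have hle : ∀ s, theta ε s ^ p ≤ 1 := fun s =>
      Real.rpow_le_one (theta_nonneg hε _) (theta_le_one _ _) (by linarith)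
    rcases le_total 0 (prim g t) with h | h
    · rw [theta_of_nonpos (s := -prim g t) (by linarith), Real.zero_rpow hp0, zero_mul, add_zero]
      exact mul_le_of_le_one_left hE (hle _)
    · rw [theta_of_nonpos (s := prim g t) h, Real.zero_rpow hp0, zero_mul, zero_add]
      exact mul_le_of_le_one_left hE (hle _)
  rw [e1, mul_add]
  linarith

lemma asymE_of_nonneg {p a b s : ℝ} (hp : 1 < p) (ha : 0 < a) (hs : 0 ≤ s) :
    asymE p a b s = (a * s) ^ p := by
  unfold asymE
  rw [max_eq_left hs, max_eq_right (by linarith), Real.zero_rpow (by linarith),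
    Real.mul_rpow ha.le hs]
  ring

lemma core {p a b L K : ℝ} (hp : 1 < p) (ha : 0 < a) (hb : 0 < b) (hL : 0 < L)
    (hG : Good p a b L K) {h : ℝ → ℝ} (hc : Continuous h) (h0 : ∀ t, 0 ≤ h t)
    (h1 : ∀ t, 1 ≤ t → h t = 0) :
    K * (L / (a + b)) ^ p * (∫ t in (0:ℝ)..1, (prim h t) ^ p) ≤ ∫ t in (0:ℝ)..1, (h t) ^ p := by
  have hS : 0 < a + b := by positivity
  set x := a * L / (a + b) with hx
  set y := b * L / (a + b) with hy
  have hx0 : 0 < x := by positivity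
  have hy0 : 0 < y := by positivity
  have hxy : L - x = y := by rw [hx, hy]; field_simp; ring
  have hxL : x ≤ L := by linarith
  have hax : a * x⁻¹ = (a + b) / L := by rw [hx]; field_simp
  have hby : b * y⁻¹ = (a + b) / L := by rw [hy]; field_simp
  have hH1 : ∀ s, 1 ≤ s → prim h s = prim h 1 := by
    intro s hs
    have e : prim h s = prim h 1 + ∫ t in (1:ℝ)..s, h t := by
      unfold prim
      rw [intervalIntegral.integral_add_adjacent_intervals] <;>
      exact hc.intervalIntegrable _ _
    have e2 : ∫ t in (1:ℝ)..s, h t = ∫ t in (1:ℝ)..s, (0:ℝ) := by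
      apply intervalIntegral.integral_congr
      intro t ht
      rw [uIcc_of_le hs] at ht
      exact h1 t ht.1
    rw [e, e2]; simp
  have hH0 : ∀ s, 0 ≤ s → 0 ≤ prim h s := fun s hs =>
    intervalIntegral.integral_nonneg hs fun t _ => h0 t
  set q : ℝ → ℝ := fun t => x⁻¹ * h (t / x) - y⁻¹ * h ((L - t) / y) with hq
  have c1 : Continuous fun t => x⁻¹ * h (t / x) := by fun_prop
  have c2 : Continuous fun t => y⁻¹ * h ((L - t) / y) := by fun_prop
  have hqc : Continuous q := c1.sub c2
  have hLy : 1 ≤ L / y := by rw [le_div_iff₀ hy0]; linarith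
  have hpq : ∀ t, prim q t = prim h (t / x) + prim h ((L - t) / y) - prim h 1 := by
    intro t
    have hd : ∀ s, HasDerivAt (fun t => prim h (t / x) + prim h ((L - t) / y)) (q s) s := by
      intro s
      have d1 := (prim_hasDerivAt hc (s / x)).comp s ((hasDerivAt_id s).div_const x)
      have d2 := (prim_hasDerivAt hc ((L - s) / y)).comp s
        (((hasDerivAt_id s).const_sub L).div_const y)
      refine (d1.add d2).congr_deriv ?_
      simp only [hq]
      ring
    have := intervalIntegral.integral_eq_sub_of_hasDerivAt (a := 0) (b := t) (fun s _ => hd s)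
      (hqc.intervalIntegrable _ _)
    rw [prim, this, zero_div, prim_zero, sub_zero, hH1 _ hLy]
    ring
  have hq0 : prim q L = 0 := by
    rw [hpq, sub_self, zero_div, prim_zero, hH1 (L / x) (by rw [le_div_iff₀ hx0]; linarith)]
    ring
  have G := hG q hqc hq0
  have i1 : Continuous fun t => |prim q t| ^ p := cont_rp hp (prim_cont hqc).abs
  have i2 := asymE_cont hp a b hqc
  rw [← intervalIntegral.integral_add_adjacent_intervals (i1.intervalIntegrable 0 x)
      (i1.intervalIntegrable x L),
    ← intervalIntegral.integral_add_adjacent_intervals (i2.intervalIntegrable 0 x)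
      (i2.intervalIntegrable x L)] at G
  have l1 : ∀ t ∈ Icc 0 x, 1 ≤ (L - t) / y := fun t ht => by
    rw [le_div_iff₀ hy0]; linarith [ht.2]
  have r1 : ∀ t ∈ Icc x L, 1 ≤ t / x := fun t ht => by
    rw [le_div_iff₀ hx0]; linarith [ht.1]
  have A1 : ∫ t in (0:ℝ)..x, |prim q t| ^ p = x * ∫ t in (0:ℝ)..1, (prim h t) ^ p := by
    have : ∫ t in (0:ℝ)..x, |prim q t| ^ p = ∫ t in (0:ℝ)..x, (prim h (t / x)) ^ p := by
      apply intervalIntegral.integral_congr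
      intro t ht
      rw [uIcc_of_le hx0.le] at ht
      simp only
      rw [hpq, hH1 _ (l1 t ht), add_sub_cancel_right,
        abs_of_nonneg (hH0 _ (div_nonneg ht.1 hx0.le))]
    rw [this, intervalIntegral.integral_comp_div (fun s => (prim h s) ^ p) hx0.ne', zero_div,
      div_self hx0.ne', smul_eq_mul]
  have A2 : ∫ t in x..L, |prim q t| ^ p = y * ∫ t in (0:ℝ)..1, (prim h t) ^ p := by
    have : ∫ t in x..L, |prim q t| ^ p = ∫ t in x..L, (prim h ((L - t) / y)) ^ p := by
      apply intervalIntegral.integral_congr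
      intro t ht
      rw [uIcc_of_le hxL] at ht
      simp only
      rw [hpq, hH1 _ (r1 t ht), add_sub_cancel_left,
        abs_of_nonneg (hH0 _ (div_nonneg (by linarith [ht.2]) hy0.le))]
    rw [this, intervalIntegral.integral_comp_sub_left (fun s => (prim h (s / y)) ^ p), sub_self,
      hxy, intervalIntegral.integral_comp_div (fun s => (prim h s) ^ p) hy0.ne', zero_div,
      div_self hy0.ne', smul_eq_mul]
  have B1 : ∫ t in (0:ℝ)..x, asymE p a b (q t) =
      ((a + b) / L) ^ p * (x * ∫ t in (0:ℝ)..1, (h t) ^ p) := by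
    have : ∫ t in (0:ℝ)..x, asymE p a b (q t) =
        ∫ t in (0:ℝ)..x, ((a + b) / L) ^ p * (h (t / x)) ^ p := by
      apply intervalIntegral.integral_congr
      intro t ht
      rw [uIcc_of_le hx0.le] at ht
      simp only [hq]
      rw [h1 _ (l1 t ht), mul_zero, sub_zero,
        asymE_of_nonneg hp ha (mul_nonneg (inv_nonneg.2 hx0.le) (h0 _)), ← mul_assoc, hax,
        Real.mul_rpow (by positivity) (h0 _)]
    rw [this, intervalIntegral.integral_const_mul,
      intervalIntegral.integral_comp_div (fun s => (h s) ^ p) hx0.ne', zero_div,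
      div_self hx0.ne', smul_eq_mul]
  have B2 : ∫ t in x..L, asymE p a b (q t) =
      ((a + b) / L) ^ p * (y * ∫ t in (0:ℝ)..1, (h t) ^ p) := by
    have : ∫ t in x..L, asymE p a b (q t) =
        ∫ t in x..L, ((a + b) / L) ^ p * (h ((L - t) / y)) ^ p := by
      apply intervalIntegral.integral_congr
      intro t ht
      rw [uIcc_of_le hxL] at ht
      simp only [hq]
      rw [h1 _ (r1 t ht), mul_zero, zero_sub, ← asymE_neg, neg_neg,
        asymE_of_nonneg hp hb (mul_nonneg (inv_nonneg.2 hy0.le) (h0 _)), ← mul_assoc, hby,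
        Real.mul_rpow (by positivity) (h0 _)]
    rw [this, intervalIntegral.integral_const_mul,
      intervalIntegral.integral_comp_sub_left (fun s => (h (s / y)) ^ p), sub_self, hxy,
      intervalIntegral.integral_comp_div (fun s => (h s) ^ p) hy0.ne', zero_div,
      div_self hy0.ne', smul_eq_mul]
  rw [A1, A2, B1, B2] at G
  set A := ∫ t in (0:ℝ)..1, (prim h t) ^ p
  set B := ∫ t in (0:ℝ)..1, (h t) ^ p
  have hxyL : x + y = L := by linarith
  have G' : L * (K * A) ≤ L * (((a + b) / L) ^ p * B) := by
    calc L * (K * A) = K * (x * A + y * A) := by rw [← add_mul, hxyL]; ring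
      _ ≤ _ := G
      _ = _ := by rw [← mul_add, ← add_mul, hxyL]; ring
  have G2 := le_of_mul_le_mul_left G' hL
  have hinv : (L / (a + b)) ^ p * ((a + b) / L) ^ p = 1 := by
    rw [← Real.mul_rpow (by positivity) (by positivity)]
    have : L / (a + b) * ((a + b) / L) = 1 := by field_simp
    rw [this, Real.one_rpow]
  have hP : 0 ≤ (L / (a + b)) ^ p := by positivity
  calc _ = (L / (a + b)) ^ p * (K * A) := by ring
    _ ≤ (L / (a + b)) ^ p * (((a + b) / L) ^ p * B) := mul_le_mul_of_nonneg_left G2 hP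
    _ = B := by rw [← mul_assoc, hinv, one_mul]

lemma MGood_of_good {p a b L K : ℝ} (hp : 1 < p) (ha : 0 < a) (hb : 0 < b) (hL : 0 < L)
    (hK : 0 ≤ K) (hG : Good p a b L K) : MGood p (K * (L / (a + b)) ^ p) := by
  intro g hg g0
  have hS : 0 < a + b := by positivity
  have hk : 0 ≤ K * (L / (a + b)) ^ p := by positivity
  have hW0 : ∀ t ∈ Icc (0:ℝ) 1, |prim g t| = prim g t := fun t ht =>
    abs_of_nonneg (intervalIntegral.integral_nonneg ht.1 fun t _ => g0 t)
  have e : ∫ t in (0:ℝ)..1, (prim g t) ^ p = ∫ t in (0:ℝ)..1, |prim g t| ^ p := by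
    apply intervalIntegral.integral_congr
    intro t ht
    rw [uIcc_of_le zero_le_one] at ht
    simp only [hW0 t ht]
  rw [e]
  refine limit_lemma hp (prim_cont hg) fun ε hε => ?_
  obtain ⟨C, hC⟩ := (isCompact_Icc (a := (0:ℝ)) (b := 1)).exists_bound_of_continuousOn
    hg.continuousOn
  have hC0 : 0 ≤ C := (norm_nonneg _).trans (hC 0 (by simp))
  have hgC : ∀ t ∈ Icc (0:ℝ) 1, g t ≤ C := fun t ht => (le_abs_self _).trans (hC t ht)
  obtain ⟨n, hn⟩ := exists_nat_ge (C / ε)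
  set h : ℝ → ℝ := fun t => g t * max 0 (1 - t ^ n) with hh
  have hc : Continuous h := by fun_prop
  have h0 : ∀ t, 0 ≤ h t := fun t => mul_nonneg (g0 t) (le_max_left _ _)
  have h1 : ∀ t, 1 ≤ t → h t = 0 := fun t ht => by
    have : 1 ≤ t ^ n := one_le_pow₀ ht
    simp only [hh]
    rw [max_eq_left (by linarith), mul_zero]
  have H := core hp ha hb hL hG hc h0 h1
  have hle : ∀ t ∈ Icc (0:ℝ) 1, h t = g t - g t * t ^ n := fun t ht => by
    have : t ^ n ≤ 1 := pow_le_one₀ ht.1 ht.2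
    simp only [hh]
    rw [max_eq_right (by linarith)]
    ring
  have hV : ∀ t ∈ Icc (0:ℝ) 1, prim g t - ε ≤ prim h t := by
    intro t ht
    have e1 : prim h t = prim g t - ∫ s in (0:ℝ)..t, g s * s ^ n := by
      have cgn : Continuous fun s => g s * s ^ n := hg.mul (continuous_pow n)
      unfold prim
      rw [← intervalIntegral.integral_sub (hg.intervalIntegrable _ _)
        (cgn.intervalIntegrable _ _)]
      apply intervalIntegral.integral_congr
      intro s hs
      rw [uIcc_of_le ht.1] at hs
      exact hle s ⟨hs.1, hs.2.trans ht.2⟩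
    have e2 : ∫ s in (0:ℝ)..t, g s * s ^ n ≤ ∫ s in (0:ℝ)..t, C * s ^ n := by
      refine intervalIntegral.integral_mono_on ht.1
        ((hg.mul (continuous_pow n)).intervalIntegrable _ _)
        ((continuous_const.mul (continuous_pow n)).intervalIntegrable _ _) fun s hs => ?_
      exact mul_le_mul_of_nonneg_right (hgC s ⟨hs.1, hs.2.trans ht.2⟩) (pow_nonneg hs.1 n)
    rw [intervalIntegral.integral_const_mul, integral_pow] at e2
    have e3 : C * ((t ^ (n + 1) - 0 ^ (n + 1)) / ((n:ℝ) + 1)) ≤ ε := by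
      have : t ^ (n + 1) ≤ 1 := pow_le_one₀ ht.1 ht.2
      rw [div_le_iff₀ hε] at hn
      rw [zero_pow (Nat.succ_ne_zero n), sub_zero, ← mul_div_assoc, div_le_iff₀ (by positivity)]
      nlinarith
    linarith
  have hpr0 : ∀ t ∈ Icc (0:ℝ) 1, 0 ≤ prim h t := fun t ht =>
    intervalIntegral.integral_nonneg ht.1 fun t _ => h0 t
  calc _ ≤ K * (L / (a + b)) ^ p * (∫ t in (0:ℝ)..1, (prim h t) ^ p) := by
        refine mul_le_mul_of_nonneg_left ?_ hk
        have := prim_cont hg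
        refine intervalIntegral.integral_mono_on zero_le_one
          ((cont_rp hp (by fun_prop)).intervalIntegrable _ _)
          ((cont_rp hp (prim_cont hc)).intervalIntegrable _ _) fun t ht => ?_
        refine Real.rpow_le_rpow (le_max_right _ _) (max_le ?_ (hpr0 t ht)) (by linarith)
        rw [hW0 t ht]
        exact hV t ht
    _ ≤ _ := H
    _ ≤ _ := by
        refine intervalIntegral.integral_mono_on zero_le_one
          ((cont_rp hp hc).intervalIntegrable _ _)
          ((cont_rp hp hg).intervalIntegrable _ _) fun t ht => ?_
        refine Real.rpow_le_rpow (h0 t) ?_ (by linarith)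
        rw [hle t ht]
        have := mul_nonneg (g0 t) (pow_nonneg ht.1 n)
        linarith

lemma good_of_nonpos {p a b L K : ℝ} (ha : 0 < a) (hb : 0 < b) (hL : 0 < L)
    (hK : K ≤ 0) : Good p a b L K := by
  intro g hg _
  have h1 : 0 ≤ ∫ t in (0:ℝ)..L, asymE p a b (g t) :=
    intervalIntegral.integral_nonneg hL.le fun t _ => asymE_nonneg ha hb _
  have h2 : 0 ≤ ∫ t in (0:ℝ)..L, |prim g t| ^ p :=
    intervalIntegral.integral_nonneg hL.le fun t _ => by positivity
  exact (mul_nonpos_of_nonpos_of_nonneg hK h2).trans h1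

theorem stmt0 (p a b L : ℝ) (hp : 1 < p) (ha : 0 < a) (hb : 0 < b) (hL : 0 < L) :
    lam1 p a b L = ((a + b) / 2) ^ p * lam1 p 1 1 L := by
  have hc : 0 < ((a + b) / 2) ^ p := by positivity
  refine eq_of_forall_le_iff fun K => ?_
  rw [mul_comm, ← div_le_iff₀ hc, le_lam1_iff hp ha hb hL, le_lam1_iff hp one_pos one_pos hL]
  rcases le_total K 0 with hK | hK
  · exact ⟨fun _ => good_of_nonpos one_pos one_pos hL (div_nonpos_of_nonpos_of_nonneg hK hc.le),
      fun _ => good_of_nonpos ha hb hL hK⟩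
  · have e : K / ((a + b) / 2) ^ p * (L / (1 + 1)) ^ p = K * (L / (a + b)) ^ p := by
      rw [div_mul_eq_mul_div, mul_div_assoc, ← Real.div_rpow (by positivity) (by positivity)]
      congr 2
      field_simp
      norm_num
    have hK' : 0 ≤ K / ((a + b) / 2) ^ p := by positivity
    constructor
    · intro h
      exact good_of_MGood hp one_pos one_pos hL hK' (e ▸ MGood_of_good hp ha hb hL hK h)
    · intro h
      exact good_of_MGood hp ha hb hL hK (e ▸ MGood_of_good hp one_pos one_pos hL hK' h)
end

section
/- Let p > 1 and a, b, L > 0, and let u be a C¹ weak solution of −Δ^{a,b}_p u = λ^{a,b}_{1,p}(0,L) |u|^{p−2} u on (0,L) with u(0) = u(L) = 0 and u > 0 on (0,L). Set t₀ = aL/(a+b). Then u'(t) > 0 for every t ∈ (0, t₀), u'(t₀) = 0, and u'(t) < 0 for every t ∈ (t₀, L); in particular t₀ is the unique critical point of u in (0,L). -/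
open Set

lemma deriv_zero_aux (H : ℝ → ℝ) (x y : ℝ) (hxy : x < y) (hc : ContinuousOn H (Set.Icc x y))
    (hd : ∀ t ∈ Set.Ioo x y, HasDerivAt H 0 t) : H x = H y := by
  obtain ⟨c, _, hc2⟩ := exists_hasDerivAt_eq_slope H (fun _ => 0) hxy hc hd
  have : y - x ≠ 0 := by linarith
  field_simp at hc2
  linarith

lemma flux_strictMono (p a b : ℝ) (hp : 1 < p) (ha : 0 < a) (hb : 0 < b) :
    StrictMono (asymFlux p a b) := by
  intro s t hst
  unfold asymFlux
  have hA : 0 < a ^ p := Real.rpow_pos_of_pos ha p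
  have hB : 0 < b ^ p := Real.rpow_pos_of_pos hb p
  have hp1 : 0 < p - 1 := by linarith
  have h1 : (max s 0) ^ (p - 1) ≤ (max t 0) ^ (p - 1) :=
    Real.rpow_le_rpow (le_max_right _ _) (max_le_max hst.le le_rfl) hp1.le
  have h2 : (max (-t) 0) ^ (p - 1) ≤ (max (-s) 0) ^ (p - 1) :=
    Real.rpow_le_rpow (le_max_right _ _) (max_le_max (by linarith) le_rfl) hp1.le
  rcases lt_or_ge 0 t with ht | ht
  · have h3 : (max s 0) ^ (p - 1) < (max t 0) ^ (p - 1) := by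
      apply Real.rpow_lt_rpow (le_max_right _ _) _ hp1
      rw [max_eq_left ht.le]
      exact max_lt hst ht
    have := mul_lt_mul_of_pos_left h3 hA
    have := mul_le_mul_of_nonneg_left h2 hB.le
    linarith
  · have h3 : (max (-t) 0) ^ (p - 1) < (max (-s) 0) ^ (p - 1) := by
      apply Real.rpow_lt_rpow (le_max_right _ _) _ hp1
      rw [max_eq_left (by linarith : (0:ℝ) ≤ -t), max_eq_left (by linarith : (0:ℝ) ≤ -s)]
      linarith
    have := mul_lt_mul_of_pos_left h3 hB
    have := mul_le_mul_of_nonneg_left h1 hA.le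
    linarith

lemma flux_continuous (p a b : ℝ) (hp : 1 < p) : Continuous (asymFlux p a b) := by
  unfold asymFlux
  have hp1 : 0 ≤ p - 1 := by linarith
  have h1 : Continuous fun s : ℝ => (max s 0) ^ (p - 1) :=
    Continuous.rpow_const (by fun_prop) (fun _ => Or.inr hp1)
  have h2 : Continuous fun s : ℝ => (max (-s) 0) ^ (p - 1) :=
    Continuous.rpow_const (by fun_prop) (fun _ => Or.inr hp1)
  fun_prop

/-- du Bois-Reymond, with globally continuous data. -/
lemma dubois (L : ℝ) (hL : 0 < L) (f g : ℝ → ℝ) (hf : Continuous f) (hg : Continuous g)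
    (h : ∀ φ φ' : ℝ → ℝ, Adm L φ φ' →
      (∫ t in (0:ℝ)..L, f t * φ' t) = ∫ t in (0:ℝ)..L, g t * φ t) :
    ∃ c, ∀ t ∈ Set.Icc (0:ℝ) L, f t = c - ∫ s in (0:ℝ)..t, g s := by
  set G : ℝ → ℝ := fun t => ∫ s in (0:ℝ)..t, g s with hG
  have hGd : ∀ t, HasDerivAt G (g t) t := fun t =>
    intervalIntegral.integral_hasDerivAt_right (hg.intervalIntegrable _ _)
      (hg.stronglyMeasurableAtFilter _ _) hg.continuousAt
  have hGc : Continuous G := continuous_iff_continuousAt.2 fun t => (hGd t).continuousAt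
  set c : ℝ := (∫ t in (0:ℝ)..L, (f t + G t)) / L with hc
  set k : ℝ → ℝ := fun t => f t + G t - c with hk
  have hkc : Continuous k := by fun_prop
  set Φ : ℝ → ℝ := fun t => ∫ s in (0:ℝ)..t, k s with hΦ
  have hΦd : ∀ t, HasDerivAt Φ (k t) t := fun t =>
    intervalIntegral.integral_hasDerivAt_right (hkc.intervalIntegrable _ _)
      (hkc.stronglyMeasurableAtFilter _ _) hkc.continuousAt
  have hΦc : Continuous Φ := continuous_iff_continuousAt.2 fun t => (hΦd t).continuousAt
  have hΦ0 : Φ 0 = 0 := by simp [hΦ]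
  have hΦL : Φ L = 0 := by
    simp only [hΦ, hk]
    rw [intervalIntegral.integral_sub (f := fun t => f t + G t)
      ((hf.add hGc).intervalIntegrable _ _)
      (continuous_const.intervalIntegrable _ _)]
    simp only [intervalIntegral.integral_const, smul_eq_mul, hc]
    field_simp
    ring
  have hadm : Adm L Φ k :=
    ⟨⟨fun t _ => (hΦd t).hasDerivWithinAt, hkc.continuousOn⟩, hΦ0, hΦL⟩
  have h1 := h Φ k hadm
  have h2 : (∫ t in (0:ℝ)..L, (g t * Φ t + G t * k t)) = 0 := by
    have := intervalIntegral.integral_eq_sub_of_hasDerivAt (a := 0) (b := L)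
      (f := fun t => G t * Φ t) (f' := fun t => g t * Φ t + G t * k t)
      (fun t _ => (hGd t).mul (hΦd t))
      (Continuous.intervalIntegrable (by fun_prop) _ _)
    rw [this]; simp [hΦ0, hΦL]
  rw [intervalIntegral.integral_add (Continuous.intervalIntegrable (by fun_prop) _ _)
    (Continuous.intervalIntegrable (by fun_prop) _ _)] at h2
  have h3 : (∫ t in (0:ℝ)..L, k t * k t) = 0 := by
    have e : (fun t => k t * k t) = fun t => (f t * k t + G t * k t) - c * k t := by
      funext t; simp only [hk]; ring
    rw [e, intervalIntegral.integral_sub (Continuous.intervalIntegrable (by fun_prop) _ _)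
      (Continuous.intervalIntegrable (by fun_prop) _ _),
      intervalIntegral.integral_add (Continuous.intervalIntegrable (by fun_prop) _ _)
      (Continuous.intervalIntegrable (by fun_prop) _ _),
      intervalIntegral.integral_const_mul]
    have : (∫ t in (0:ℝ)..L, k t) = 0 := hΦL
    rw [this]; linarith
  refine ⟨c, fun t ht => ?_⟩
  by_contra hne
  have hkt : k t ≠ 0 := by
    intro h0; apply hne; simp only [hk, hG] at h0; linarith
  have : 0 < ∫ t in (0:ℝ)..L, k t * k t := by
    apply intervalIntegral.integral_pos hL (by fun_prop) (fun x _ => mul_self_nonneg _)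
    exact ⟨t, ht, mul_self_pos.2 hkt⟩
  linarith

/-- du Bois-Reymond in differential form, for data continuous on the interval. -/
lemma dubois' (L : ℝ) (hL : 0 < L) (f g : ℝ → ℝ) (hf : ContinuousOn f (Set.Icc 0 L))
    (hg : ContinuousOn g (Set.Icc 0 L))
    (h : ∀ φ φ' : ℝ → ℝ, Adm L φ φ' →
      (∫ t in (0:ℝ)..L, f t * φ' t) = ∫ t in (0:ℝ)..L, g t * φ t) :
    ∀ t ∈ Set.Ioo (0:ℝ) L, HasDerivAt f (-g t) t := by
  set F := Set.IccExtend hL.le (Set.domRestrict (Set.Icc 0 L) f) with hF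
  set G := Set.IccExtend hL.le (Set.domRestrict (Set.Icc 0 L) g) with hG
  have hFc : Continuous F := (continuousOn_iff_continuous_domRestrict.1 hf).Icc_extend'
  have hGc : Continuous G := (continuousOn_iff_continuous_domRestrict.1 hg).Icc_extend'
  have hFe : ∀ t ∈ Set.Icc 0 L, F t = f t := fun t ht => by
    simp [hF, Set.IccExtend_of_mem _ _ ht, Set.domRestrict]
  have hGe : ∀ t ∈ Set.Icc 0 L, G t = g t := fun t ht => by
    simp [hG, Set.IccExtend_of_mem _ _ ht, Set.domRestrict]
  obtain ⟨c, hc⟩ := dubois L hL F G hFc hGc (by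
    intro φ φ' hφ
    have := h φ φ' hφ
    rw [intervalIntegral.integral_congr (g := fun t => f t * φ' t),
      intervalIntegral.integral_congr (a := 0) (b := L) (f := fun t => G t * φ t)
        (g := fun t => g t * φ t), this]
    · intro t ht
      rw [Set.uIcc_of_le hL.le] at ht
      simp only [hGe t ht]
    · intro t ht
      rw [Set.uIcc_of_le hL.le] at ht
      simp only [hFe t ht])
  intro t ht
  have hd : HasDerivAt (fun t => c - ∫ s in (0:ℝ)..t, G s) (-G t) t :=
    (intervalIntegral.integral_hasDerivAt_right (hGc.intervalIntegrable _ _)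
      (hGc.stronglyMeasurableAtFilter _ _) hGc.continuousAt).const_sub c
  rw [← hGe t ⟨ht.1.le, ht.2.le⟩]
  apply hd.congr_of_eventuallyEq
  filter_upwards [Icc_mem_nhds ht.1 ht.2] with s hs
  rw [← hFe s hs, hc s hs]

/-- A normalized increasing profile. -/
structure Prof (p lam T : ℝ) (v z : ℝ → ℝ) : Prop where
  hT : 0 < T
  vc : ContinuousOn v (Set.Icc 0 T)
  zc : ContinuousOn z (Set.Icc 0 T)
  v0 : v 0 = 0
  zT : z T = 0
  zpos : ∀ s ∈ Set.Ioo 0 T, 0 < z s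
  vd : ∀ s ∈ Set.Ioo 0 T, HasDerivAt v (z s) s
  wd : ∀ s ∈ Set.Ioo 0 T, HasDerivAt (fun s => z s ^ (p - 1)) (-(lam * v s ^ (p - 1))) s

lemma Prof.smono {p lam T : ℝ} {v z : ℝ → ℝ} (h : Prof p lam T v z) :
    StrictMonoOn v (Set.Icc 0 T) := by
  apply strictMonoOn_of_deriv_pos (convex_Icc _ _) h.vc
  intro x hx
  rw [interior_Icc] at hx
  rw [(h.vd x hx).deriv]
  exact h.zpos x hx

lemma Prof.energy {p lam T : ℝ} {v z : ℝ → ℝ} (hp : 1 < p) (h : Prof p lam T v z)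
    (s : ℝ) (hs : s ∈ Set.Ioo 0 T) :
    (p - 1) * z s ^ p + lam * v s ^ p = lam * v T ^ p := by
  have hp1 : p - 1 ≠ 0 := by linarith
  have hp0 : p ≠ 0 := by linarith
  have key := deriv_zero_aux (fun s => (p - 1) * z s ^ p + lam * v s ^ p) s T hs.2 (by
    have hsub : Set.Icc s T ⊆ Set.Icc 0 T := Set.Icc_subset_Icc_left hs.1.le
    have h1 := (h.zc.mono hsub).rpow_const (p := p) (fun _ _ => Or.inr (by linarith))
    have h2 := (h.vc.mono hsub).rpow_const (p := p) (fun _ _ => Or.inr (by linarith))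
    fun_prop) (by
    intro t ht
    have ht' : t ∈ Set.Ioo 0 T := ⟨hs.1.trans ht.1, ht.2⟩
    have hzt := h.zpos t ht'
    have e1 : ∀ x ∈ Set.Ioo 0 T, z x ^ p = (z x ^ (p - 1)) ^ (p / (p - 1)) := by
      intro x hx
      rw [← Real.rpow_mul (h.zpos x hx).le]
      congr 1; field_simp
    have d1 : HasDerivAt (fun x => z x ^ p)
        (-(lam * v t ^ (p - 1)) * (p / (p - 1)) * (z t ^ (p - 1)) ^ (p / (p - 1) - 1)) t := by
      refine ((h.wd t ht').rpow_const (p := p / (p - 1))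
        (Or.inl (Real.rpow_pos_of_pos hzt _).ne')).congr_of_eventuallyEq ?_
      filter_upwards [Ioo_mem_nhds ht'.1 ht'.2] with x hx
      exact e1 x hx
    have e2 : (z t ^ (p - 1)) ^ (p / (p - 1) - 1) = z t := by
      rw [← Real.rpow_mul hzt.le]
      have : (p - 1) * (p / (p - 1) - 1) = 1 := by field_simp; ring
      rw [this, Real.rpow_one]
    rw [e2] at d1
    have d2 := (h.vd t ht').rpow_const (p := p) (Or.inr hp.le)
    have d3 := (d1.const_mul (p - 1)).add (d2.const_mul lam)
    have e3 : (p - 1) * (-(lam * v t ^ (p - 1)) * (p / (p - 1)) * z t)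
        + lam * (z t * p * v t ^ (p - 1)) = 0 := by
      field_simp
      ring
    rw [e3] at d3
    exact d3)
  simp only [h.zT, Real.zero_rpow hp0] at key
  linarith

lemma Prof.z_eq {p lam T : ℝ} {v z : ℝ → ℝ} (hp : 1 < p) (h : Prof p lam T v z)
    (s : ℝ) (hs : s ∈ Set.Ioo 0 T) :
    z s = (lam / (p - 1) * (v T ^ p - v s ^ p)) ^ (1 / p) := by
  have hp1 : p - 1 ≠ 0 := by linarith
  have hp0 : p ≠ 0 := by linarith
  have e : lam / (p - 1) * (v T ^ p - v s ^ p) = z s ^ p := by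
    have := h.energy hp s hs
    field_simp
    linarith
  rw [e, ← Real.rpow_mul (h.zpos s hs).le, mul_one_div_cancel hp0, Real.rpow_one]

/-- the time map -/
noncomputable def timeMap (p lam M x : ℝ) : ℝ :=
  ∫ r in (0:ℝ)..x, ((lam / (p - 1) * (M ^ p - |r| ^ p)) ^ (1 / p))⁻¹

lemma timeMap_cont {p lam M : ℝ} (hp : 1 < p) (hl : 0 < lam) :
    ContinuousOn (fun r : ℝ => ((lam / (p - 1) * (M ^ p - |r| ^ p)) ^ (1 / p))⁻¹)
      (Set.Ioo (-M) M) := by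
  have hp1 : 0 < p - 1 := by linarith
  have hpos : ∀ r ∈ Set.Ioo (-M) M, 0 < lam / (p - 1) * (M ^ p - |r| ^ p) := by
    intro r hr
    have : |r| ^ p < M ^ p :=
      Real.rpow_lt_rpow (abs_nonneg _) (abs_lt.2 hr) (by linarith)
    exact mul_pos (div_pos hl hp1) (by linarith)
  have h1 : Continuous fun r : ℝ => |r| ^ p :=
    Continuous.rpow_const (by fun_prop) (fun _ => Or.inr (by linarith))
  apply ContinuousOn.inv₀
  · apply ContinuousOn.rpow_const
    · exact (continuous_const.mul (continuous_const.sub h1)).continuousOn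
    · intro x hx; exact Or.inl (hpos x hx).ne'
  · intro x hx; exact (Real.rpow_pos_of_pos (hpos x hx) _).ne'

lemma timeMap_deriv {p lam M : ℝ} (hp : 1 < p) (hl : 0 < lam) (x : ℝ)
    (hx : x ∈ Set.Ico 0 M) : HasDerivAt (timeMap p lam M)
      ((lam / (p - 1) * (M ^ p - x ^ p)) ^ (1 / p))⁻¹ x := by
  have hc := timeMap_cont (M := M) hp hl
  have hx' : x ∈ Set.Ioo (-M) M := ⟨by linarith [hx.1, hx.2], hx.2⟩
  have := intervalIntegral.integral_hasDerivAt_right (a := 0) (b := x)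
    (f := fun r : ℝ => ((lam / (p - 1) * (M ^ p - |r| ^ p)) ^ (1 / p))⁻¹)
    (ContinuousOn.intervalIntegrable (hc.mono (by
      rw [Set.uIcc_of_le hx.1]
      intro y hy
      exact ⟨by linarith [hx.1, hx.2, hy.1], by linarith [hx.2, hy.2]⟩)))
    (hc.stronglyMeasurableAtFilter isOpen_Ioo x hx')
    (hc.continuousAt (Ioo_mem_nhds hx'.1 hx'.2))
  simp only [abs_of_nonneg hx.1] at this
  exact this

lemma Prof.time {p lam T : ℝ} {v z : ℝ → ℝ} (hp : 1 < p) (hl : 0 < lam)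
    (h : Prof p lam T v z) (s : ℝ) (hs : s ∈ Set.Ioo 0 T) :
    timeMap p lam (v T) (v s) = s := by
  have hmem : ∀ x ∈ Set.Ico 0 T, v x ∈ Set.Ico 0 (v T) := by
    intro x hx
    refine ⟨?_, h.smono ⟨hx.1, hx.2.le⟩ ⟨h.hT.le, le_rfl⟩ hx.2⟩
    rw [← h.v0]
    exact h.smono.monotoneOn ⟨le_rfl, h.hT.le⟩ ⟨hx.1, hx.2.le⟩ hx.1
  have key := deriv_zero_aux (fun x => timeMap p lam (v T) (v x) - x) 0 s hs.1 (by
    apply ContinuousOn.sub _ continuousOn_id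
    have hv : ContinuousOn v (Set.Icc 0 s) := h.vc.mono (Set.Icc_subset_Icc_right hs.2.le)
    have ht : ContinuousOn (timeMap p lam (v T)) (Set.Ico 0 (v T)) := fun x hx =>
      (timeMap_deriv hp hl x hx).continuousAt.continuousWithinAt
    exact ht.comp hv (fun x hx => hmem x ⟨hx.1, hx.2.trans_lt hs.2⟩)) (by
    intro t ht
    have ht' : t ∈ Set.Ioo 0 T := ⟨ht.1, ht.2.trans hs.2⟩
    have d := ((timeMap_deriv hp hl (v t) (hmem t ⟨ht'.1.le, ht'.2⟩)).comp t (h.vd t ht')).sub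
      (hasDerivAt_id t)
    rw [← h.z_eq hp t ht', inv_mul_cancel₀ (h.zpos t ht').ne', sub_self] at d
    exact d)
  have h0 : timeMap p lam (v T) 0 = 0 := by simp [timeMap]
  simp only [h.v0, h0] at key
  linarith

lemma Prof.le {p lam T T' : ℝ} {v z v' z' : ℝ → ℝ} (hp : 1 < p) (hl : 0 < lam)
    (h : Prof p lam T v z) (h' : Prof p lam T' v' z') (hM : v T = v' T') : T' ≤ T := by
  by_contra hlt
  push Not at hlt
  have hT1 : T ∈ Set.Ioo 0 T' := ⟨h.hT, hlt⟩
  have hm : v' T < v T := by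
    rw [hM]
    exact h'.smono ⟨hT1.1.le, hT1.2.le⟩ ⟨h'.hT.le, le_rfl⟩ hlt
  have h0 : 0 < v' T := by
    rw [← h'.v0]
    exact h'.smono ⟨le_rfl, h'.hT.le⟩ ⟨hT1.1.le, hT1.2.le⟩ h.hT
  obtain ⟨s, hs, hse⟩ := intermediate_value_Ioo h.hT.le h.vc
    (show v' T ∈ Set.Ioo (v 0) (v T) from ⟨by rw [h.v0]; exact h0, hm⟩)
  have e1 := h.time hp hl s hs
  have e2 := h'.time hp hl T hT1
  rw [hse, hM, e2] at e1
  exact absurd hs.2 (by rw [e1]; exact lt_irrefl _)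

theorem stmt3 (p a b L : ℝ) (hp : 1 < p) (ha : 0 < a) (hb : 0 < b) (hL : 0 < L)
    (u u' : ℝ → ℝ)
    (hsol : IsWeakSol p a b L u u' (fun t => lam1 p a b L * |u t| ^ (p - 2) * u t))
    (hpos : ∀ t ∈ Set.Ioo (0:ℝ) L, 0 < u t) :
    (∀ t ∈ Set.Ioo (0:ℝ) (a * L / (a + b)), 0 < u' t) ∧
    u' (a * L / (a + b)) = 0 ∧
    (∀ t ∈ Set.Ioo (a * L / (a + b)) L, u' t < 0) := by
  obtain ⟨⟨⟨hd, hc'⟩, hu0, huL⟩, hweak⟩ := hsol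
  generalize lam1 p a b L = lam at hweak
  have hp1 : 0 < p - 1 := by linarith
  have hcu : ContinuousOn u (Set.Icc 0 L) := fun t ht => (hd t ht).continuousWithinAt
  have hdi : ∀ t ∈ Set.Ioo (0:ℝ) L, HasDerivAt u (u' t) t := fun t ht =>
    (hd t ⟨ht.1.le, ht.2.le⟩).hasDerivAt (Icc_mem_nhds ht.1 ht.2)
  have hnn : ∀ t ∈ Set.Icc (0:ℝ) L, 0 ≤ u t := by
    intro t ht
    rcases eq_or_lt_of_le ht.1 with h | h
    · rw [← h, hu0]
    · rcases eq_or_lt_of_le ht.2 with h2 | h2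
      · rw [h2, huL]
      · exact (hpos t ⟨h, h2⟩).le
  have hge : ∀ t ∈ Set.Icc (0:ℝ) L, lam * |u t| ^ (p - 2) * u t = lam * u t ^ (p - 1) := by
    intro t ht
    rcases eq_or_lt_of_le (hnn t ht) with h | h
    · rw [← h, Real.zero_rpow hp1.ne']; simp
    · rw [abs_of_pos h, mul_assoc, ← Real.rpow_add_one h.ne']
      congr 2; ring
  have hwc : ContinuousOn (fun t => asymFlux p a b (u' t)) (Set.Icc 0 L) :=
    (flux_continuous p a b hp).comp_continuousOn hc'
  have hgc : ContinuousOn (fun t => lam * u t ^ (p - 1)) (Set.Icc 0 L) :=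
    continuousOn_const.mul (hcu.rpow_const (fun _ _ => Or.inr hp1.le))
  have hw := dubois' L hL _ _ hwc hgc (by
    intro φ φ' hφ
    rw [hweak φ φ' hφ]
    apply intervalIntegral.integral_congr
    intro t ht
    rw [Set.uIcc_of_le hL.le] at ht
    simp only [hge t ht])
  have hmono := flux_strictMono p a b hp ha hb
  obtain ⟨τ, hτ, hτ0⟩ := exists_hasDerivAt_eq_zero hL hcu (by rw [hu0, huL]) hdi
  have hl : 0 < lam := by
    by_contra hl
    push Not at hl
    have hm : MonotoneOn (fun t => asymFlux p a b (u' t)) (Set.Icc 0 L) := by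
      apply monotoneOn_of_deriv_nonneg (convex_Icc _ _) hwc
      · intro t ht
        rw [interior_Icc] at ht
        exact (hw t ht).differentiableAt.differentiableWithinAt
      · intro t ht
        rw [interior_Icc] at ht
        rw [(hw t ht).deriv]
        have := Real.rpow_pos_of_pos (hpos t ht) (p - 1)
        nlinarith
    have hm2 : MonotoneOn u (Set.Icc τ L) := by
      apply monotoneOn_of_deriv_nonneg (convex_Icc _ _)
        (hcu.mono (Set.Icc_subset_Icc_left hτ.1.le))
      · intro t ht
        rw [interior_Icc] at ht
        exact (hdi t ⟨hτ.1.trans ht.1, ht.2⟩).differentiableAt.differentiableWithinAt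
      · intro t ht
        rw [interior_Icc] at ht
        rw [(hdi t ⟨hτ.1.trans ht.1, ht.2⟩).deriv, ← hτ0]
        exact hmono.le_iff_le.1 (hm ⟨hτ.1.le, hτ.2.le⟩ ⟨(hτ.1.trans ht.1).le, ht.2.le⟩ ht.1.le)
    have := hm2 ⟨le_rfl, hτ.2.le⟩ ⟨hτ.2.le, le_rfl⟩ hτ.2.le
    have := hpos τ hτ
    linarith
  have hanti : StrictAntiOn u' (Set.Icc 0 L) := by
    have hm : StrictAntiOn (fun t => asymFlux p a b (u' t)) (Set.Icc 0 L) := by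
      apply strictAntiOn_of_deriv_neg (convex_Icc _ _) hwc
      intro t ht
      rw [interior_Icc] at ht
      rw [(hw t ht).deriv]
      have := mul_pos hl (Real.rpow_pos_of_pos (hpos t ht) (p - 1))
      linarith
    intro x hx y hy hxy
    exact hmono.lt_iff_lt.1 (hm hx hy hxy)
  have hL1 : ∀ t ∈ Set.Ico 0 τ, 0 < u' t := by
    intro t ht
    rw [← hτ0]
    exact hanti ⟨ht.1, (ht.2.trans hτ.2).le⟩ ⟨hτ.1.le, hτ.2.le⟩ ht.2
  have hR1 : ∀ t ∈ Set.Ioc τ L, u' t < 0 := by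
    intro t ht
    rw [← hτ0]
    exact hanti ⟨hτ.1.le, hτ.2.le⟩ ⟨(hτ.1.trans ht.1).le, ht.2⟩ ht.1
  have hfp : ∀ s : ℝ, 0 < s → asymFlux p a b s = a * (a * s) ^ (p - 1) := by
    intro s hs
    unfold asymFlux
    rw [max_eq_left hs.le, max_eq_right (by linarith : -s ≤ 0), Real.zero_rpow hp1.ne',
      Real.mul_rpow ha.le hs.le, ← mul_assoc, ← Real.rpow_one_add' ha.le (by linarith)]
    simp
  have hfn : ∀ s : ℝ, s < 0 → asymFlux p a b s = -(b * (b * -s) ^ (p - 1)) := by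
    intro s hs
    unfold asymFlux
    rw [max_eq_right hs.le, max_eq_left (by linarith : 0 ≤ -s), Real.zero_rpow hp1.ne',
      Real.mul_rpow hb.le (by linarith : 0 ≤ -s), ← mul_assoc,
      ← Real.rpow_one_add' hb.le (by linarith)]
    simp
  have P1 : Prof p lam (τ / a) (fun s => u (a * s)) (fun s => a * u' (a * s)) := by
    have hin : ∀ s ∈ Set.Icc 0 (τ / a), a * s ∈ Set.Icc 0 τ := by
      intro s hs
      have := (le_div_iff₀' ha).1 hs.2
      exact ⟨mul_nonneg ha.le hs.1, this⟩
    have hio : ∀ s ∈ Set.Ioo 0 (τ / a), a * s ∈ Set.Ioo 0 τ := by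
      intro s hs
      have := (lt_div_iff₀' ha).1 hs.2
      exact ⟨mul_pos ha hs.1, this⟩
    have hlin : ∀ s : ℝ, HasDerivAt (fun s => a * s) a s := fun s => by
      simpa using (hasDerivAt_id s).const_mul a
    refine ⟨div_pos hτ.1 ha, ?_, ?_, by simp [hu0], ?_, ?_, ?_, ?_⟩
    · exact hcu.comp (f := fun s => a * s) (by fun_prop)
        (fun s hs => ⟨(hin s hs).1, (hin s hs).2.trans hτ.2.le⟩)
    · exact continuousOn_const.mul (hc'.comp (f := fun s => a * s) (by fun_prop)
        (fun s hs => ⟨(hin s hs).1, (hin s hs).2.trans hτ.2.le⟩))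
    · simp only [mul_div_cancel₀ τ ha.ne', hτ0, mul_zero]
    · intro s hs
      exact mul_pos ha (hL1 _ ⟨(hio s hs).1.le, (hio s hs).2⟩)
    · intro s hs
      have := (hdi (a * s) ⟨(hio s hs).1, (hio s hs).2.trans hτ.2⟩).comp s (hlin s)
      rw [mul_comm] at this
      exact this
    · intro s hs
      have := ((hw (a * s) ⟨(hio s hs).1, (hio s hs).2.trans hτ.2⟩).comp s (hlin s)).const_mul a⁻¹
      have e : a⁻¹ * (-(lam * u (a * s) ^ (p - 1)) * a) = -(lam * u (a * s) ^ (p - 1)) := by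
        field_simp
      rw [e] at this
      apply this.congr_of_eventuallyEq
      filter_upwards [Ioo_mem_nhds hs.1 hs.2] with x hx
      simp only [Function.comp]
      rw [hfp _ (hL1 _ ⟨(hio x hx).1.le, (hio x hx).2⟩), inv_mul_cancel_left₀ ha.ne']
  have P2 : Prof p lam ((L - τ) / b) (fun s => u (L - b * s)) (fun s => b * -u' (L - b * s)) := by
    have hin : ∀ s ∈ Set.Icc 0 ((L - τ) / b), L - b * s ∈ Set.Icc τ L := by
      intro s hs
      have := (le_div_iff₀' hb).1 hs.2
      have := mul_nonneg hb.le hs.1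
      constructor <;> linarith
    have hio : ∀ s ∈ Set.Ioo 0 ((L - τ) / b), L - b * s ∈ Set.Ioo τ L := by
      intro s hs
      have := (lt_div_iff₀' hb).1 hs.2
      have := mul_pos hb hs.1
      constructor <;> linarith
    have hlin : ∀ s : ℝ, HasDerivAt (fun s => L - b * s) (-b) s := fun s => by
      simpa using ((hasDerivAt_id s).const_mul b).const_sub L
    refine ⟨div_pos (by linarith [hτ.2]) hb, ?_, ?_, by simp [huL], ?_, ?_, ?_, ?_⟩
    · exact hcu.comp (f := fun s => L - b * s) (by fun_prop)
        (fun s hs => ⟨hτ.1.le.trans (hin s hs).1, (hin s hs).2⟩)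
    · exact continuousOn_const.mul (hc'.comp (f := fun s => L - b * s) (by fun_prop)
        (fun s hs => ⟨hτ.1.le.trans (hin s hs).1, (hin s hs).2⟩)).neg
    · simp only [mul_div_cancel₀ (L - τ) hb.ne', sub_sub_cancel, hτ0, neg_zero, mul_zero]
    · intro s hs
      exact mul_pos hb (neg_pos.2 (hR1 _ ⟨(hio s hs).1, (hio s hs).2.le⟩))
    · intro s hs
      have := (hdi (L - b * s) ⟨hτ.1.trans (hio s hs).1, (hio s hs).2⟩).comp s (hlin s)
      have e : u' (L - b * s) * -b = b * -u' (L - b * s) := by ring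
      rw [e] at this
      exact this
    · intro s hs
      have := ((hw (L - b * s) ⟨hτ.1.trans (hio s hs).1, (hio s hs).2⟩).comp s
        (hlin s)).const_mul (-b⁻¹)
      have e : -b⁻¹ * (-(lam * u (L - b * s) ^ (p - 1)) * -b)
          = -(lam * u (L - b * s) ^ (p - 1)) := by
        field_simp
      rw [e] at this
      apply this.congr_of_eventuallyEq
      filter_upwards [Ioo_mem_nhds hs.1 hs.2] with x hx
      simp only [Function.comp]
      rw [hfn _ (hR1 _ ⟨(hio x hx).1, (hio x hx).2.le⟩), neg_mul_neg, inv_mul_cancel_left₀ hb.ne']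
  have hM : u (a * (τ / a)) = u (L - b * ((L - τ) / b)) := by
    rw [mul_div_cancel₀ τ ha.ne', mul_div_cancel₀ (L - τ) hb.ne', sub_sub_cancel]
  have hTT : τ / a = (L - τ) / b :=
    le_antisymm (P2.le hp hl P1 hM.symm) (P1.le hp hl P2 hM)
  have hτe : a * L / (a + b) = τ := by
    have : a + b ≠ 0 := by positivity
    field_simp at hTT ⊢
    linarith
  rw [hτe]
  exact ⟨fun t ht => hL1 t ⟨ht.1.le, ht.2⟩, hτ0, fun t ht => hR1 t ⟨ht.1, ht.2.le⟩⟩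
end
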